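/- arXiv:2504.11525 — 2 statements merged into one kernel-verified Lean document; each statement's English description precedes it below -/
import Mathlib

section
/- Let n ≥ 1, d ≥ 1 and m = Nat.choose (n + d − 1) (d − 1). Let Sym denote the subspace of EuclideanSpace ℂ (Fin n → Fin d) consisting of symmetric vectors (ψ (i ∘ σ) = ψ i for all permutations σ of Fin n). Then every subspace V ⊆ Sym with finrank V ≥ m − d + 1 contains a nonzero fully product vector. -/
/-- A vector of the `n`-qudit space is *fully product* if it is a simple tensor. -/
def FullyProduct {n d : ℕ} (ψ : EuclideanSpace ℂ (Fin n → Fin d)) : Prop :=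
  ∃ φ : Fin n → Fin d → ℂ, ∀ i, ψ i = ∏ j, φ j (i j)

/-- A vector is *symmetric* if it is invariant under all permutations of the parties. -/
def SymmetricVec {n d : ℕ} (ψ : EuclideanSpace ℂ (Fin n → Fin d)) : Prop :=
  ∀ (σ : Equiv.Perm (Fin n)) (i : Fin n → Fin d), ψ (i ∘ σ) = ψ i

open MvPolynomial in
/-- Fewer polynomials than variables over an algebraically closed field never have
exactly one common zero. -/
theorem exists_ne_common_zero {K σ ι : Type*} [Field K] [IsAlgClosed K] [Finite σ] [Finite ι]
    (hcard : Nat.card ι < Nat.card σ) (f : ι → MvPolynomial σ K) (p : σ → K)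
    (hp : ∀ k, eval p (f k) = 0) : ∃ q, q ≠ p ∧ ∀ k, eval q (f k) = 0 := by
  have hdim : ringKrullDim (MvPolynomial σ K) = Nat.card σ := by
    simp [ringKrullDim_of_isNoetherianRing]
  have : FiniteRingKrullDim (MvPolynomial σ K) := by
    rw [finiteRingKrullDim_iff_ne_bot_and_top, hdim]
    exact ⟨by simp, WithBot.coe_injective.ne (ENat.natCast_ne_top _)⟩
  obtain ⟨M, hM, hMheight⟩ := Ideal.exists_isMaximal_height (R := MvPolynomial σ K)
  obtain ⟨x, rfl⟩ := (isMaximal_iff_eq_vanishingIdeal_singleton).mp hM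
  by_contra! h
  let g (k : ι) : MvPolynomial σ K := aeval (fun j ↦ X j + C (p j - x j)) (f k)
  have hg (y : σ → K) (k : ι) : eval y (g k) = eval (fun j ↦ y j + (p j - x j)) (f k) := by
    simp only [g, ← coe_aeval_eq_eval, RingHom.coe_coe, ← AlgHom.comp_apply]
    congr 1
    ext j
    simp
  have hzero : zeroLocus K (Ideal.span (Set.range g)) = {x} := by
    rw [zeroLocus_span]
    ext y
    simp only [Set.mem_ofPred_eq, Set.forall_mem_range, aeval_eq_eval, Set.mem_singleton_iff]
    constructor
    · intro hy
      by_contra hne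
      obtain ⟨k, hk⟩ := h (fun j ↦ y j + (p j - x j)) fun he ↦ hne <| funext fun j ↦ by
        linear_combination congrFun he j
      exact hk ((hg y k).symm.trans (hy k))
    · rintro rfl k
      exact (hg y k).trans (by simpa using hp k)
  have hmin : vanishingIdeal K {x} ∈ (Ideal.span (Set.range g)).minimalPrimes := by
    rw [← Ideal.radical_minimalPrimes, ← vanishingIdeal_zeroLocus_eq_radical (K := K), hzero,
      Ideal.minimalPrimes_eq_subsingleton_self]
    rfl
  have hle := Ideal.height_le_card_of_mem_minimalPrimes_span (Set.finite_range g) hmin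
  have hle' : (Nat.card σ : WithBot ℕ∞) ≤ ((Set.range g).ncard : ℕ∞) := by
    rw [← hdim, ← hMheight]
    exact WithBot.coe_le_coe.mpr hle
  have hrange : (Set.range g).ncard ≤ Nat.card ι := by
    rw [← Nat.card_coe_set_eq]
    exact Finite.card_range_le g
  have : Nat.card σ ≤ (Set.range g).ncard := by exact_mod_cast hle'
  omega

/-- The subspace of symmetric vectors. -/
def symmetricSubspace (n d : ℕ) : Submodule ℂ (EuclideanSpace ℂ (Fin n → Fin d)) where
  carrier := {ψ | SymmetricVec ψ}
  add_mem' ha hb σ i := by simp [ha σ i, hb σ i]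
  zero_mem' σ i := by simp
  smul_mem' c ψ hψ σ i := by simp [hψ σ i]

theorem exists_perm_comp_eq {α β : Type*} [Fintype α] {f g : α → β}
    (h : Multiset.map f Finset.univ.val = Multiset.map g Finset.univ.val) :
    ∃ σ : Equiv.Perm α, f ∘ σ = g := by
  classical
  have hfiber (b : β) : Nonempty ({a // g a = b} ≃ {a // f a = b}) := by
    refine Fintype.card_eq.mp ?_
    have := congrArg (Multiset.count b) h
    simp only [Multiset.count_map, ← Finset.filter_val, Finset.card_val] at this
    simp only [Fintype.card_subtype, @eq_comm _ _ b, this]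
  exact ⟨Equiv.ofFiberEquiv fun b ↦ (hfiber b).some, funext (Equiv.ofFiberEquiv_map _)⟩

theorem finrank_symmetricSubspace_le (n d : ℕ) :
    Module.finrank ℂ (symmetricSubspace n d) ≤ (d + n - 1).choose n := by
  have hrep (s : Sym (Fin d) n) : ∃ i : Fin n → Fin d, Multiset.map i Finset.univ.val = s := by
    obtain ⟨s, hs⟩ := s
    induction s using Quotient.inductionOn with
    | h l =>
      obtain rfl : l.length = n := by simpa using hs
      exact ⟨l.get, by simp [Fin.univ_val_map]⟩
  choose rep hrep using hrep
  let Φ : symmetricSubspace n d →ₗ[ℂ] (Sym (Fin d) n → ℂ) :=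
    { toFun := fun ψ s ↦ ψ.1 (rep s)
      map_add' := fun _ _ ↦ rfl
      map_smul' := fun _ _ ↦ rfl }
  have hΦ : Function.Injective Φ := by
    refine (injective_iff_map_eq_zero Φ).mpr fun ψ hψ ↦ Subtype.ext <| PiLp.ext fun i ↦ ?_
    let s : Sym (Fin d) n := ⟨Multiset.map i Finset.univ.val, by simp⟩
    obtain ⟨σ, hσ⟩ : ∃ σ : Equiv.Perm (Fin n), rep s ∘ σ = i :=
      exists_perm_comp_eq (hrep s)
    have := congrFun hψ s
    rw [← hσ, ψ.2 σ (rep s)]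
    exact this
  calc _ ≤ Module.finrank ℂ (Sym (Fin d) n → ℂ) := LinearMap.finrank_le_finrank_of_injective hΦ
    _ = _ := by rw [Module.finrank_pi, Sym.card_sym_eq_choose, Fintype.card_fin]

/-- The tensor power of a single-qudit vector. -/
def tensorPower (n : ℕ) {d : ℕ} (φ : Fin d → ℂ) : EuclideanSpace ℂ (Fin n → Fin d) :=
  WithLp.toLp 2 fun i ↦ ∏ j, φ (i j)

theorem tensorPower_mem_symmetricSubspace (n : ℕ) {d : ℕ} (φ : Fin d → ℂ) :
    tensorPower n φ ∈ symmetricSubspace n d := fun σ i ↦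
  Equiv.prod_comp σ fun j ↦ φ (i j)

theorem tensorPower_ne_zero (n : ℕ) {d : ℕ} {φ : Fin d → ℂ} (hφ : φ ≠ 0) :
    tensorPower n φ ≠ 0 := by
  obtain ⟨a, ha⟩ := Function.ne_iff.mp hφ
  intro h
  have : ∏ _j : Fin n, φ a = 0 := congrArg (fun ψ ↦ ψ fun _ ↦ a) h
  exact Finset.prod_ne_zero_iff.mpr (fun _ _ ↦ ha) this

open MvPolynomial in
theorem exists_polynomial_eval_eq_tensorPower (n : ℕ) {d : ℕ}
    (L : EuclideanSpace ℂ (Fin n → Fin d) →ₗ[ℂ] ℂ) :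
    ∃ f : MvPolynomial (Fin d) ℂ, ∀ φ, eval φ f = L (tensorPower n φ) := by
  let L' := L ∘ₗ (WithLp.linearEquiv 2 ℂ ((Fin n → Fin d) → ℂ)).symm.toLinearMap
  refine ⟨∑ i, (∏ j, X (i j)) * C (L' fun k ↦ if i = k then 1 else 0), fun φ ↦ ?_⟩
  refine Eq.trans ?_ (L'.pi_apply_eq_sum_univ fun i ↦ ∏ j, φ (i j)).symm
  simp

theorem le_choose_add_sub_one {n d : ℕ} (hn : 1 ≤ n) (hd : 1 ≤ d) :
    d ≤ (n + d - 1).choose (d - 1) := by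
  calc d = d.choose (d - 1) := by
        rw [Nat.choose_symm hd, Nat.choose_one_right]
    _ ≤ _ := Nat.choose_le_choose _ (by omega)

/-- Lemma 3: any subspace of the symmetric subspace of `⊗^n ℂ^d` of dimension at
least `m − d + 1` (where `m = (n + d − 1).choose (d − 1)`) contains a nonzero
fully product vector. -/
theorem symmetric_subspace_contains_product (n d : ℕ) (hn : 1 ≤ n) (hd : 1 ≤ d)
    (m : ℕ) (hm : m = Nat.choose (n + d - 1) (d - 1))
    (V : Submodule ℂ (EuclideanSpace ℂ (Fin n → Fin d)))
    (hV : ∀ ψ ∈ V, SymmetricVec ψ)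
    (hrank : m - d + 1 ≤ Module.finrank ℂ ↥V) :
    ∃ ψ ∈ V, ψ ≠ 0 ∧ FullyProduct ψ := by
  let S := symmetricSubspace n d
  let W := V.submoduleOf S
  have hVS : V ≤ S := hV
  have hW : Module.finrank ℂ W = Module.finrank ℂ V :=
    (Submodule.submoduleOfEquivOfLe hVS).finrank_eq
  have hS : Module.finrank ℂ S ≤ m := by
    refine (finrank_symmetricSubspace_le n d).trans_eq ?_
    rw [hm, add_comm d n, ← Nat.choose_symm (by omega)]
    congr 1
    omega
  have hdm : d ≤ m := hm ▸ le_choose_add_sub_one hn hd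
  have hQ := W.finrank_quotient_add_finrank
  let b := Module.finBasis ℂ (S ⧸ W)
  obtain ⟨L, hL⟩ := LinearMap.exists_extend (b.equivFun.toLinearMap ∘ₗ W.mkQ)
  choose f hf using fun k ↦ exists_polynomial_eval_eq_tensorPower n (LinearMap.proj k ∘ₗ L)
  have hzero : tensorPower n (0 : Fin d → ℂ) = 0 := by
    ext i
    simp [tensorPower, Finset.prod_const, show n ≠ 0 by omega]
  obtain ⟨φ, hφ, hfφ⟩ := exists_ne_common_zero
    (by simp only [Nat.card_eq_fintype_card, Fintype.card_fin]; omega) f 0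
    (fun k ↦ by rw [hf, hzero, map_zero])
  refine ⟨tensorPower n φ, ?_, tensorPower_ne_zero n hφ, fun _ ↦ φ, fun _ ↦ rfl⟩
  let ψ : S := ⟨tensorPower n φ, tensorPower_mem_symmetricSubspace n φ⟩
  have hLψ : L (tensorPower n φ) = 0 := funext fun k ↦ (hf k φ).symm.trans (hfφ k)
  have hbψ : b.equivFun (W.mkQ ψ) = 0 := (LinearMap.congr_fun hL ψ).symm.trans hLψ
  have hψ : W.mkQ ψ = 0 := b.equivFun.map_eq_zero_iff.mp hbψ
  exact (Submodule.Quotient.mk_eq_zero W).mp hψ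
end

section
/- Let n ≥ 2, d ≥ 2 and m = Nat.choose (n + d − 1) (d − 1), and let Sym denote the symmetric subspace of EuclideanSpace ℂ (Fin n → Fin d). Then: (a) there exists a subspace G ⊆ Sym with finrank G = m − d such that every nonzero vector of G is genuinely multipartite entangled; and (b) every subspace V ⊆ Sym with finrank V = m − d + 1 contains a nonzero vector that is not GME (indeed, a nonzero fully product vector). Hence the maximum dimension of a GES contained in the symmetric subspace is m − d. -/
/-- `ψ` is biseparable across the bipartition `(S, Sᶜ)` of the `n` qudits. -/
def Biseparable {n d : ℕ} (S : Set (Fin n))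
    (ψ : EuclideanSpace ℂ (Fin n → Fin d)) : Prop :=
  ∃ (φ : ((j : S) → Fin d) → ℂ) (χ : ((j : ↥Sᶜ) → Fin d) → ℂ),
    ∀ i, ψ i = φ (fun j => i j.val) * χ (fun j => i j.val)

/-- A nonzero vector is genuinely multipartite entangled if it is not biseparable
across any nontrivial bipartition. -/
def GME {n d : ℕ} (ψ : EuclideanSpace ℂ (Fin n → Fin d)) : Prop :=
  ψ ≠ 0 ∧ ∀ S : Set (Fin n), S ≠ ∅ → S ≠ Set.univ → ¬ Biseparable S ψ

open Module

section Tuples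

variable {n : ℕ} {α : Type*}

/-- The multiset of the entries of a tuple, as an element of the symmetric power. -/
def symOfTuple (i : Fin n → α) : Sym α n :=
  ⟨(List.ofFn i : Multiset α), by simp⟩

theorem coe_symOfTuple (i : Fin n → α) :
    (symOfTuple i : Multiset α) = Finset.univ.val.map i := by
  simp [symOfTuple, List.ofFn_eq_map, Fin.univ_val_map]

theorem symOfTuple_surjective : Function.Surjective (symOfTuple (n := n) (α := α)) := by
  rintro ⟨s, hs⟩
  induction s using Quotient.inductionOn with
  | _ l =>
    have hl : l.length = n := hs
    subst hl
    exact ⟨l.get, Subtype.ext (congrArg Multiset.ofList (List.ofFn_get l))⟩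

theorem symOfTuple_comp_perm (σ : Equiv.Perm (Fin n)) (i : Fin n → α) :
    symOfTuple (i ∘ σ) = symOfTuple i :=
  Subtype.ext (Multiset.coe_eq_coe.2 (σ.ofFn_comp_perm i))

theorem symOfTuple_const (a : α) : symOfTuple (fun _ : Fin n => a) = Sym.replicate n a :=
  Subtype.ext (congrArg Multiset.ofList (List.ofFn_const n a))

theorem exists_perm_of_symOfTuple_eq [LinearOrder α] {i j : Fin n → α}
    (h : symOfTuple i = symOfTuple j) : ∃ σ : Equiv.Perm (Fin n), i ∘ σ = j := by
  have hp : (List.ofFn i).Perm (List.ofFn j) := Multiset.coe_eq_coe.1 (congrArg Subtype.val h)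
  have hs : i ∘ Tuple.sort i = j ∘ Tuple.sort j :=
    List.ofFn_injective <|
      (((Tuple.sort i).ofFn_comp_perm i).trans
        (hp.trans ((Tuple.sort j).ofFn_comp_perm j).symm)).eq_of_sortedLE
        (Tuple.monotone_sort i).sortedLE_ofFn (Tuple.monotone_sort j).sortedLE_ofFn
  refine ⟨Tuple.sort i * (Tuple.sort j)⁻¹, ?_⟩
  rw [Equiv.Perm.coe_mul, ← Function.comp_assoc, hs]
  ext x
  simp

end Tuples

section SymmetricVectors

variable {n d : ℕ}

/-- The symmetric vector whose amplitude at a basis index depends only on the multiset of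
its entries. -/
def symmetricEmbedding (n d : ℕ) :
    (Sym (Fin d) n → ℂ) →ₗ[ℂ] EuclideanSpace ℂ (Fin n → Fin d) :=
  (WithLp.linearEquiv 2 ℂ ((Fin n → Fin d) → ℂ)).symm.toLinearMap ∘ₗ
    LinearMap.funLeft ℂ ℂ symOfTuple

@[simp]
theorem symmetricEmbedding_apply (g : Sym (Fin d) n → ℂ) (i : Fin n → Fin d) :
    symmetricEmbedding n d g i = g (symOfTuple i) := rfl

theorem symmetricEmbedding_injective : Function.Injective (symmetricEmbedding n d) := by
  intro g h hgh
  ext s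
  obtain ⟨i, rfl⟩ := symOfTuple_surjective s
  simpa using congrArg (fun ψ : EuclideanSpace ℂ (Fin n → Fin d) => ψ i) hgh

theorem symmetricVec_symmetricEmbedding (g : Sym (Fin d) n → ℂ) :
    SymmetricVec (symmetricEmbedding n d g) := fun σ i => by
  simp [symOfTuple_comp_perm]

theorem SymmetricVec.mem_range {ψ : EuclideanSpace ℂ (Fin n → Fin d)} (h : SymmetricVec ψ) :
    ψ ∈ LinearMap.range (symmetricEmbedding n d) := by
  refine ⟨fun s => ψ (Function.surjInv symOfTuple_surjective s), ?_⟩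
  ext i
  obtain ⟨σ, hσ⟩ := exists_perm_of_symOfTuple_eq
    (Function.surjInv_eq symOfTuple_surjective (symOfTuple i))
  rw [symmetricEmbedding_apply, ← h σ, hσ]

/-- If a symmetric biseparable vector has a nonzero amplitude at `i`, then changing any entry
of `i` to another entry of `i` keeps the amplitude nonzero. -/
theorem SymmetricVec.update_ne_zero {ψ : EuclideanSpace ℂ (Fin n → Fin d)} (h : SymmetricVec ψ)
    {S : Set (Fin n)} (hS : S ≠ ∅) (hS' : S ≠ Set.univ) (hb : Biseparable S ψ)
    {i : Fin n → Fin d} (hi : ψ i ≠ 0) (p q : Fin n) :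
    ψ (Function.update i q (i p)) ≠ 0 := by
  obtain rfl | hpq := eq_or_ne p q
  · simpa using hi
  obtain ⟨s, hs⟩ := Set.nonempty_iff_ne_empty.2 hS
  obtain ⟨t, ht⟩ := (Set.ne_univ_iff_exists_notMem S).1 hS'
  have hst : s ≠ t := by rintro rfl; exact ht hs
  obtain ⟨σ, hσ⟩ := Equiv.Perm.exists_extending_pair ![s, t] ![p, q]
    (by simpa using hst) (by simpa using hpq)
  have hσs : σ s = p := hσ 0
  have hσt : σ t = q := hσ 1
  obtain ⟨φ, χ, hφχ⟩ := hb
  have h₁ : ψ (i ∘ σ) ≠ 0 := by rwa [h]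
  have h₂ : ψ (i ∘ σ ∘ Equiv.swap s t) ≠ 0 := by
    have := h (σ * Equiv.swap s t) i
    rw [Equiv.Perm.coe_mul] at this
    rwa [this]
  rw [← h σ, hφχ]
  rw [hφχ] at h₁ h₂
  convert mul_ne_zero (left_ne_zero_of_mul h₁) (right_ne_zero_of_mul h₂) using 3
  · ext ⟨j, hj⟩
    have hjq : σ j ≠ q := by
      rw [← hσt]
      intro hjt
      exact ht (σ.injective hjt ▸ hj)
    simp [hjq]
  · ext ⟨j, hj⟩
    have hjs : j ≠ s := by rintro rfl; exact hj hs
    obtain rfl | hjt := eq_or_ne j t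
    · simp [hσs, hσt]
    · have hjq : σ j ≠ q := by
        rw [← hσt]
        exact fun e => hjt (σ.injective e)
      simp [hjq, Equiv.swap_apply_of_ne_of_ne hjs hjt]

theorem SymmetricVec.const_ne_zero {ψ : EuclideanSpace ℂ (Fin n → Fin d)} (h : SymmetricVec ψ)
    {S : Set (Fin n)} (hS : S ≠ ∅) (hS' : S ≠ Set.univ) (hb : Biseparable S ψ)
    {i : Fin n → Fin d} (hi : ψ i ≠ 0) (p : Fin n) : ψ (fun _ => i p) ≠ 0 := by
  have key : ∀ T : Finset (Fin n), ψ (T.piecewise (fun _ => i p) i) ≠ 0 := by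
    intro T
    induction T using Finset.induction_on with
    | empty => simpa using hi
    | insert q T _ ih =>
      have := h.update_ne_zero hS hS' hb ih p q
      rw [Finset.piecewise_insert]
      by_cases hp : p ∈ T <;> simpa [hp] using this
  simpa using key Finset.univ

theorem SymmetricVec.gme_of_const_eq_zero {ψ : EuclideanSpace ℂ (Fin n → Fin d)}
    (hn : n ≠ 0) (h : SymmetricVec ψ) (h₀ : ∀ k, ψ (fun _ => k) = 0) (hψ : ψ ≠ 0) : GME ψ := by
  refine ⟨hψ, fun S hS hS' hb => hψ ?_⟩
  ext i
  by_contra hi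
  exact h.const_ne_zero hS hS' hb hi ⟨0, Nat.pos_of_ne_zero hn⟩ (h₀ _)

theorem FullyProduct.biseparable {ψ : EuclideanSpace ℂ (Fin n → Fin d)} (h : FullyProduct ψ)
    (S : Set (Fin n)) : Biseparable S ψ := by
  classical
  obtain ⟨φ, hφ⟩ := h
  refine ⟨fun i => ∏ j : S, φ j (i j), fun i => ∏ j : ↥Sᶜ, φ j (i j), fun i => ?_⟩
  rw [hφ, ← Fintype.prod_subtype_mul_prod_subtype (· ∈ S)]
  rfl

theorem FullyProduct.not_gme {ψ : EuclideanSpace ℂ (Fin n → Fin d)} (hn : 2 ≤ n)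
    (h : FullyProduct ψ) : ¬ GME ψ := fun hg => by
  have : Nontrivial (Fin n) := Fin.nontrivial_iff_two_le.2 hn
  exact hg.2 {⟨0, by omega⟩} (Set.singleton_ne_empty _) (Set.singleton_ne_univ _)
    (h.biseparable _)

end SymmetricVectors

section CommonZeros

variable {K ι : Type*} [Field K] [IsAlgClosed K] [Finite ι]

open MvPolynomial

/-- Fewer than `Nat.card ι` polynomials in variables `ι` that vanish at the origin have another
common zero. -/
theorem exists_ne_zero_common_zero (s : Finset (MvPolynomial ι K)) (hs : s.card < Nat.card ι)
    (h₀ : ∀ f ∈ s, eval 0 f = 0) : ∃ x : ι → K, x ≠ 0 ∧ ∀ f ∈ s, eval x f = 0 := by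
  classical
  by_contra! hne
  have hdim : ringKrullDim (MvPolynomial ι K) ≤ (s.card : WithBot ℕ∞) := by
    rw [ringKrullDim_le_iff_isMaximal_height_le]
    intro M hM
    obtain ⟨x, rfl⟩ := eq_vanishingIdeal_singleton_of_isMaximal K hM
    let τ : MvPolynomial ι K →ₐ[K] MvPolynomial ι K := aeval fun i => X i - C (x i)
    have hτ : ∀ y f, aeval y (τ f) = eval (y - x) f := by
      intro y f
      induction f using MvPolynomial.induction_on with
      | C a => simp [τ]
      | add p q hp hq => rw [map_add, map_add, map_add, hp, hq]
      | mul_X p i hp => rw [map_mul, map_mul, map_mul, hp]; simp [τ]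
    have hz : zeroLocus K (Ideal.span (s.image τ : Set (MvPolynomial ι K))) = {x} := by
      rw [zeroLocus_span]
      ext y
      simp only [Finset.coe_image, Set.mem_image, forall_exists_index, and_imp,
        forall_apply_eq_imp_iff₂, Set.mem_ofPred_eq, Set.mem_singleton_iff,
        Finset.mem_coe, hτ]
      constructor
      · intro hy
        by_contra hyx
        obtain ⟨f, hf, hfy⟩ := hne (y - x) (sub_ne_zero.2 hyx)
        exact hfy (hy f hf)
      · rintro rfl f hf
        simpa only [sub_self] using h₀ f hf
    have hrad := vanishingIdeal_zeroLocus_eq_radical (k := K) (K := K)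
      (Ideal.span (s.image τ : Set (MvPolynomial ι K)))
    rw [hz] at hrad
    have hmin : vanishingIdeal K {x} ∈
        (Ideal.span (s.image τ : Set (MvPolynomial ι K))).minimalPrimes := by
      refine ⟨⟨inferInstance, hrad ▸ Ideal.le_radical⟩, fun q hq _ => ?_⟩
      rw [hrad]
      exact hq.1.radical_le_iff.2 hq.2
    have := (Ideal.height_le_card_of_mem_minimalPrimes_span_finset hmin).trans
      (Nat.cast_le.2 Finset.card_image_le)
    exact_mod_cast this
  rw [MvPolynomial.ringKrullDim_of_isNoetherianRing, ringKrullDim_eq_zero_of_field,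
    zero_add] at hdim
  exact absurd (by exact_mod_cast hdim) hs.not_ge

end CommonZeros

section ProductVectors

variable {n d : ℕ}

/-- The values of a linear functional at symmetric product vectors, as a polynomial in the
entries of the one-party vector. -/
noncomputable def veronesePolynomial (ℓ : Dual ℂ (Sym (Fin d) n → ℂ)) : MvPolynomial (Fin d) ℂ :=
  ∑ s, MvPolynomial.C (ℓ fun t => if s = t then 1 else 0) *
    ((s : Multiset (Fin d)).map MvPolynomial.X).prod

theorem eval_veronesePolynomial (ℓ : Dual ℂ (Sym (Fin d) n → ℂ)) (x : Fin d → ℂ) :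
    MvPolynomial.eval x (veronesePolynomial ℓ) =
      ℓ fun s => ((s : Multiset (Fin d)).map x).prod := by
  conv_rhs => rw [LinearMap.pi_apply_eq_sum_univ ℓ]
  simp [veronesePolynomial, map_multiset_prod, mul_comm]

theorem exists_veronese_mem (hn : n ≠ 0) (W : Submodule ℂ (Sym (Fin d) n → ℂ))
    (hW : Fintype.card (Sym (Fin d) n) < finrank ℂ W + d) :
    ∃ x : Fin d → ℂ, x ≠ 0 ∧
      (fun s : Sym (Fin d) n => ((s : Multiset (Fin d)).map x).prod) ∈ W := by
  classical
  let b := finBasis ℂ W.dualAnnihilator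
  have hcard := Subspace.finrank_add_finrank_dualAnnihilator_eq W
  rw [finrank_fintype_fun_eq_card] at hcard
  obtain ⟨x, hx, hxz⟩ := exists_ne_zero_common_zero
    (Finset.univ.image fun k => veronesePolynomial (b k : Dual ℂ (Sym (Fin d) n → ℂ)))
    (Finset.card_image_le.trans_lt (by simp; omega)) (by
      simp only [Finset.mem_image, Finset.mem_univ, true_and, forall_exists_index,
        forall_apply_eq_imp_iff, eval_veronesePolynomial]
      intro k
      rw [show (fun s : Sym (Fin d) n => ((s : Multiset (Fin d)).map (0 : Fin d → ℂ)).prod) = 0 by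
        ext s; simp [hn], map_zero])
  refine ⟨x, hx, ?_⟩
  rw [← Subspace.forall_mem_dualAnnihilator_apply_eq_zero_iff]
  intro ℓ hℓ
  have hb : (Dual.eval ℂ (Sym (Fin d) n → ℂ)
      fun s => ((s : Multiset (Fin d)).map x).prod).domRestrict W.dualAnnihilator = 0 :=
    b.ext fun k => by
      simpa [eval_veronesePolynomial] using hxz _ (Finset.mem_image_of_mem _ (Finset.mem_univ k))
  exact LinearMap.congr_fun hb ⟨ℓ, hℓ⟩

end ProductVectors

theorem card_le_card_sym (n d : ℕ) (hn : n ≠ 0) : d ≤ Fintype.card (Sym (Fin d) n) := by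
  simpa using Fintype.card_le_of_injective (fun k : Fin d => Sym.replicate n k)
    (Sym.replicate_right_injective hn)

/-- Theorem 5: the maximum dimension of a genuinely entangled subspace contained in
the symmetric subspace of `⊗^n ℂ^d` is `m − d`, where
`m = (n + d − 1).choose (d − 1)`. -/
theorem max_dim_symmetric_GES (n d : ℕ) (hn : 2 ≤ n) (hd : 2 ≤ d)
    (m : ℕ) (hm : m = Nat.choose (n + d - 1) (d - 1)) :
    (∃ G : Submodule ℂ (EuclideanSpace ℂ (Fin n → Fin d)),
        (∀ ψ ∈ G, SymmetricVec ψ) ∧ Module.finrank ℂ ↥G = m - d ∧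
        ∀ ψ ∈ G, ψ ≠ 0 → GME ψ) ∧
    (∀ V : Submodule ℂ (EuclideanSpace ℂ (Fin n → Fin d)),
        (∀ ψ ∈ V, SymmetricVec ψ) → Module.finrank ℂ ↥V = m - d + 1 →
        ∃ ψ ∈ V, ψ ≠ 0 ∧ FullyProduct ψ ∧ ¬ GME ψ) := by
  have hn0 : n ≠ 0 := by omega
  have hcard : Fintype.card (Sym (Fin d) n) = m := by
    rw [Sym.card_sym_eq_choose, Fintype.card_fin, hm, ← Nat.choose_symm_of_eq_add]
    · congr 1; omega
    · omega
  have hdm : d ≤ m := hcard ▸ card_le_card_sym n d hn0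
  constructor
  · let D : (Sym (Fin d) n → ℂ) →ₗ[ℂ] (Fin d → ℂ) :=
      LinearMap.funLeft ℂ ℂ fun k => Sym.replicate n k
    refine ⟨D.ker.map (symmetricEmbedding n d), ?_, ?_, ?_⟩
    · rintro _ ⟨g, -, rfl⟩
      exact symmetricVec_symmetricEmbedding g
    · have hD : Function.Surjective D :=
        LinearMap.funLeft_surjective_of_injective _ _ _ (Sym.replicate_right_injective hn0)
      have hr := D.finrank_range_add_finrank_ker
      rw [LinearMap.range_eq_top.2 hD, finrank_top, finrank_fintype_fun_eq_card,
        finrank_fintype_fun_eq_card, hcard, Fintype.card_fin] at hr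
      rw [← (Submodule.equivMapOfInjective _ symmetricEmbedding_injective D.ker).finrank_eq]
      omega
    · rintro _ ⟨g, hg, rfl⟩ hψ
      refine (symmetricVec_symmetricEmbedding g).gme_of_const_eq_zero hn0 (fun k => ?_) hψ
      rw [symmetricEmbedding_apply, symOfTuple_const]
      exact congrFun hg k
  · intro V hV hVr
    have hVW : (V.comap (symmetricEmbedding n d)).map (symmetricEmbedding n d) = V :=
      Submodule.map_comap_eq_of_le fun ψ hψ => (hV ψ hψ).mem_range
    have hWr : finrank ℂ (V.comap (symmetricEmbedding n d)) = m - d + 1 := by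
      rw [← hVr, (Submodule.equivMapOfInjective _ symmetricEmbedding_injective _).finrank_eq, hVW]
    obtain ⟨x, hx, hxW⟩ := exists_veronese_mem hn0 (V.comap (symmetricEmbedding n d)) (by omega)
    have hval : ∀ i, symmetricEmbedding n d
        (fun s : Sym (Fin d) n => ((s : Multiset (Fin d)).map x).prod) i = ∏ j, x (i j) := by
      intro i
      rw [symmetricEmbedding_apply, coe_symOfTuple, Multiset.map_map]
      rfl
    have hprod : FullyProduct (symmetricEmbedding n d
        fun s : Sym (Fin d) n => ((s : Multiset (Fin d)).map x).prod) := ⟨fun _ => x, hval⟩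
    refine ⟨_, hxW, fun h => ?_, hprod, hprod.not_gme hn⟩
    obtain ⟨k, hk⟩ := Function.ne_iff.1 hx
    have := hval fun _ => k
    rw [h] at this
    simp only [Finset.prod_const] at this
    exact pow_ne_zero _ hk this.symm
end
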